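/- arXiv:1307.3649 — 2 statements merged into one kernel-verified Lean document; each statement's English description precedes it below -/
import Mathlib

section
/- Explicit formulas for the first half of the remainders of the Euclidean algorithm with symmetric quotients: let q_1, …, q_s be positive integers, let r_1, …, r_{2s+2} be the associated remainder sequence of the symmetric Euclidean scheme, and let 𝔠_{i,j} denote the continuants of (q_1, …, q_s). Then for every 1 ≤ i ≤ s+1, r_i = 𝔠_{1,s}·𝔠_{i,s} + 𝔠_{1,s−1}·𝔠_{i,s−1}. -/
/-- Auxiliary for continuants: `contAux u i n` is the continuant `𝔠_{i, i+n-1}` of the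
sequence `u`, computed via the recurrence `𝔠_{i,j} = u j * 𝔠_{i,j-1} + 𝔠_{i,j-2}`. -/
def contAux (u : ℤ → ℤ) (i : ℤ) : ℕ → ℤ
  | 0 => 1
  | 1 => u i
  | n + 2 => u (i + n + 1) * contAux u i (n + 1) + contAux u i n

/-- `cont u i j` is the continuant `𝔠_{i,j}` of the sequence `u`, with the boundary
conventions `𝔠_{j+1,j} = 1` and `𝔠_{i,j} = 0` for `i > j + 1` (in particular
`𝔠_{j+2,j} = 0`), and the recurrence `𝔠_{i,j} = u j * 𝔠_{i,j-1} + 𝔠_{i,j-2}`. -/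
def cont (u : ℤ → ℤ) (i j : ℤ) : ℤ :=
  if j + 1 < i then 0 else contAux u i (j + 1 - i).toNat

/-- The symmetric doubling of `(q_1, …, q_s)`:
`(Q_1, …, Q_{2s}) = (q_1, …, q_s, q_s, …, q_1)`. -/
def symQuot (q : ℤ → ℤ) (s : ℕ) (k : ℤ) : ℤ :=
  if k ≤ (s : ℤ) then q k else q (2 * (s : ℤ) + 1 - k)

/-- Auxiliary: `symAux q s m` is the remainder `r_{2s+2-m}` of the symmetric
Euclidean scheme attached to `(q_1, …, q_s)`. -/
def symAux (q : ℤ → ℤ) (s : ℕ) : ℕ → ℤ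
  | 0 => 0
  | 1 => 1
  | m + 2 => symQuot q s (2 * (s : ℤ) - (m : ℤ)) * symAux q s (m + 1) + symAux q s m

/-- `symRem q s k` is the remainder `r_k` of the symmetric Euclidean scheme attached to
`(q_1, …, q_s)`: with `(Q_1, …, Q_{2s}) = (q_1, …, q_s, q_s, …, q_1)`, one has
`r_{2s+2} = 0`, `r_{2s+1} = 1`, and `r_k = Q_k * r_{k+1} + r_{k+2}` for `1 ≤ k ≤ 2s`. -/
def symRem (q : ℤ → ℤ) (s : ℕ) (k : ℤ) : ℤ :=
  symAux q s (2 * (s : ℤ) + 2 - k).toNat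

/-! A sequence with `r k = u k * r (k + 1) + r (k + 2)` satisfies
`r i = 𝔠_{i,j} * r (j + 1) + 𝔠_{i,j-1} * r (j + 2)` for all `j ≥ i - 1`: unfolding `r (j + 1)`
produces the continuant recurrence in `j`. For the symmetric scheme take `j = s`; the second half of
the quotients is `q_s, …, q_1`, so read from the end the remainders obey the recurrence of
`𝔠_{1,m}`, which gives `r (s + 1) = 𝔠_{1,s}` and `r (s + 2) = 𝔠_{1,s-1}`. -/

section Continuants

variable (u : ℤ → ℤ) {i j : ℤ}

theorem cont_eq_zero_of_add_one_lt (h : j + 1 < i) : cont u i j = 0 :=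
  if_pos h

theorem cont_eq_contAux {n : ℕ} (h : i + n = j + 1) : cont u i j = contAux u i n := by
  have hn : (j + 1 - i).toNat = n := by omega
  rw [cont, if_neg (by omega), hn]

theorem cont_sub_one_right (i : ℤ) : cont u i (i - 1) = 1 := by
  rw [cont_eq_contAux u (n := 0) (by simp), contAux]

theorem cont_self (i : ℤ) : cont u i i = u i := by
  rw [cont_eq_contAux u (n := 1) (by simp), contAux]

theorem cont_eq_mul_add (h : i ≤ j) :
    cont u i j = u j * cont u i (j - 1) + cont u i (j - 2) := by
  obtain rfl | hlt := h.eq_or_lt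
  · rw [cont_self, cont_sub_one_right, cont_eq_zero_of_add_one_lt u (by omega), mul_one, add_zero]
  · obtain ⟨n, rfl⟩ : ∃ n : ℕ, j = i + n + 1 := ⟨(j - i - 1).toNat, by omega⟩
    rw [cont_eq_contAux u (n := n + 2) (by lia), cont_eq_contAux u (n := n + 1) (by lia),
      cont_eq_contAux u (n := n) (by lia), contAux]

theorem eq_cont_mul_add_cont_mul {r : ℤ → ℤ} (hij : i - 1 ≤ j)
    (hr : ∀ k, i ≤ k → k ≤ j → r k = u k * r (k + 1) + r (k + 2)) :
    r i = cont u i j * r (j + 1) + cont u i (j - 1) * r (j + 2) := by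
  induction j, hij using Int.leInduction with
  | base => simp [cont_sub_one_right, cont_eq_zero_of_add_one_lt]
  | succ j hij ih =>
    have hi : i ≤ j + 1 := by omega
    have hcont : cont u i (j + 1) = u (j + 1) * cont u i j + cont u i (j - 1) := by
      rw [cont_eq_mul_add u hi]
      ring_nf
    calc
      r i = cont u i j * r (j + 1) + cont u i (j - 1) * r (j + 2) :=
        ih fun k hik hkj => hr k hik (by omega)
      _ = cont u i j * (u (j + 1) * r (j + 2) + r (j + 3)) + cont u i (j - 1) * r (j + 2) := by
        rw [hr (j + 1) hi le_rfl]
        ring_nf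
      _ = cont u i (j + 1) * r (j + 2) + cont u i j * r (j + 3) := by
        rw [hcont]
        ring
      _ = cont u i (j + 1) * r (j + 1 + 1) + cont u i (j + 1 - 1) * r (j + 1 + 2) := by
        ring_nf

end Continuants

section SymmetricScheme

variable (q : ℤ → ℤ) (s : ℕ) {k : ℤ}

theorem symQuot_of_le (h : k ≤ s) : symQuot q s k = q k :=
  if_pos h

theorem symQuot_of_lt (h : s < k) : symQuot q s k = q (2 * s + 1 - k) :=
  if_neg h.not_ge

theorem symRem_eq_symAux {m : ℕ} (h : k + m = 2 * s + 2) : symRem q s k = symAux q s m := by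
  have hm : (2 * (s : ℤ) + 2 - k).toNat = m := by omega
  rw [symRem, hm]

theorem symRem_eq_symQuot_mul_add (h : k ≤ 2 * s) :
    symRem q s k = symQuot q s k * symRem q s (k + 1) + symRem q s (k + 2) := by
  obtain ⟨m, rfl⟩ : ∃ m : ℕ, k = 2 * s - m := ⟨(2 * s - k).toNat, by omega⟩
  rw [symRem_eq_symAux q s (m := m + 2) (by lia), symRem_eq_symAux q s (m := m + 1) (by lia),
    symRem_eq_symAux q s (m := m) (by lia), symAux]

theorem symRem_eq_cont_of_lt (hsk : s < k) (hk : k ≤ 2 * s + 2) :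
    symRem q s k = cont q 1 (2 * s + 1 - k) := by
  obtain ⟨n, hn⟩ : ∃ n : ℕ, k + n = 2 * s + 2 := ⟨(2 * s + 2 - k).toNat, by omega⟩
  induction n using Nat.twoStepInduction generalizing k with
  | zero => rw [symRem_eq_symAux q s hn, cont_eq_zero_of_add_one_lt q (by omega), symAux]
  | one => rw [symRem_eq_symAux q s hn, cont_eq_contAux q (n := 0) (by omega), symAux, contAux]
  | more n ih ih_succ =>
    rw [symRem_eq_symQuot_mul_add q s (by omega), symQuot_of_lt q s hsk,
      ih_succ (by omega) (by omega) (by omega), ih (by omega) (by omega) (by omega),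
      cont_eq_mul_add q (by omega : 1 ≤ 2 * s + 1 - k), sub_sub _ k 1, sub_sub _ k 2]

theorem symRem_first_half_formula_general {i : ℤ} (hi : i ≤ s + 1) :
    symRem q s i = cont q 1 s * cont q i s + cont q 1 (s - 1) * cont q i (s - 1) := by
  have hrec (k : ℤ) (hk : k ≤ s) :
      symRem q s k = q k * symRem q s (k + 1) + symRem q s (k + 2) := by
    rw [symRem_eq_symQuot_mul_add q s (by omega), symQuot_of_le q s hk]
  have hmid : symRem q s (s + 1) = cont q 1 s := by
    rw [symRem_eq_cont_of_lt q s (by omega) (by omega)]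
    ring_nf
  have hmid_succ : symRem q s (s + 2) = cont q 1 (s - 1) := by
    rw [symRem_eq_cont_of_lt q s (by omega) (by omega)]
    ring_nf
  rw [eq_cont_mul_add_cont_mul q (by omega) fun k _ hk => hrec k hk, hmid, hmid_succ]
  ring

end SymmetricScheme

theorem symRem_first_half_formula
    (s : ℕ) (hs : 1 ≤ s) (q : ℤ → ℤ) (hq : ∀ k : ℤ, 1 ≤ k → k ≤ (s : ℤ) → 0 < q k)
    (i : ℤ) (hi : 1 ≤ i) (his : i ≤ (s : ℤ) + 1) :
    symRem q s i =
      cont q 1 (s : ℤ) * cont q i (s : ℤ) +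
        cont q 1 ((s : ℤ) - 1) * cont q i ((s : ℤ) - 1) :=
  symRem_first_half_formula_general q s his
end

section
/- If the Euclidean algorithm with relatively prime positive integers n and a produces a symmetric sequence of quotients, then n divides a² + 1: precisely, let q_1, …, q_s be positive integers and let r_1, …, r_{2s+2} be the associated remainder sequence of the symmetric Euclidean scheme with n = r_1 and a = r_2. Then a² ≡ −1 (mod n). -/
/-!
Encode a quotient `x` by the symmetric matrix `!![x, 1; 1, 0]` of determinant `-1`. The product of
these matrices over the quotient sequence has top row `(n, a)`. Transposing it reverses the
sequence, so for a palindrome the product is a symmetric matrix `!![n, a; a, b]`, and over `2 * s`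
quotients its determinant is `n * b - a ^ 2 = 1`.
-/

section ContinuantMatrix

variable {R : Type*} [CommRing R]

/-- The matrix of one Euclidean step with quotient `x`, which sends `(r_{k+1}, r_{k+2})` to
`(r_k, r_{k+1})`. -/
def quotientMatrix (x : R) : Matrix (Fin 2) (Fin 2) R :=
  !![x, 1; 1, 0]

/-- The matrix of a whole Euclidean scheme with quotient sequence `l`; its entries are the
continuants of `l` with or without its first and its last term. -/
def continuantMatrix (l : List R) : Matrix (Fin 2) (Fin 2) R :=
  (l.map quotientMatrix).prod

theorem isSymm_quotientMatrix (x : R) : (quotientMatrix x).IsSymm := by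
  ext i j
  fin_cases i <;> fin_cases j <;> rfl

theorem det_quotientMatrix (x : R) : (quotientMatrix x).det = -1 := by
  simp [quotientMatrix, Matrix.det_fin_two]

theorem continuantMatrix_concat (l : List R) (x : R) :
    continuantMatrix (l ++ [x]) = continuantMatrix l * quotientMatrix x := by
  simp [continuantMatrix]

theorem transpose_continuantMatrix (l : List R) :
    (continuantMatrix l).transpose = continuantMatrix l.reverse := by
  simp [continuantMatrix, Matrix.transpose_list_prod, Function.comp_def,
    (isSymm_quotientMatrix _).eq]

theorem det_continuantMatrix (l : List R) : (continuantMatrix l).det = (-1) ^ l.length := by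
  induction l using List.reverseRecOn with
  | nil => simp [continuantMatrix]
  | append_singleton l x ih =>
    simp [continuantMatrix_concat, Matrix.det_mul, ih, det_quotientMatrix, pow_succ]

theorem isSymm_continuantMatrix_of_reverse_eq {l : List R} (hl : l.reverse = l) :
    (continuantMatrix l).IsSymm := by
  rw [Matrix.IsSymm, transpose_continuantMatrix, hl]

theorem continuantMatrix_dvd_sq_add_of_reverse_eq {l : List R} (hl : l.reverse = l) :
    continuantMatrix l 0 0 ∣ continuantMatrix l 0 1 ^ 2 + (-1) ^ l.length := by
  have hsymm : continuantMatrix l 1 0 = continuantMatrix l 0 1 :=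
    (isSymm_continuantMatrix_of_reverse_eq hl).apply 0 1
  have hdet := det_continuantMatrix l
  rw [Matrix.det_fin_two, hsymm] at hdet
  exact ⟨continuantMatrix l 1 1, by linear_combination -hdet⟩

theorem continuantMatrix_map_range_row_zero {n : ℕ} {Q r : ℕ → R} (h0 : r 0 = 0) (h1 : r 1 = 1)
    (hr : ∀ m < n, r (m + 2) = Q m * r (m + 1) + r m) :
    continuantMatrix ((List.range n).map Q) 0 = ![r (n + 1), r n] := by
  induction n with
  | zero =>
    ext j
    fin_cases j <;> simp [continuantMatrix, h0, h1]
  | succ n ih =>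
    have hrow := ih fun m hm => hr m (hm.trans n.lt_succ_self)
    rw [List.range_succ, List.map_append, List.map_singleton, continuantMatrix_concat]
    ext j
    fin_cases j <;>
      simp [Matrix.mul_apply, quotientMatrix, hrow, hr n n.lt_succ_self, mul_comm]

theorem reverse_map_range_eq_self {α : Type*} {n : ℕ} {Q : ℕ → α}
    (hQ : ∀ i j, i + j + 1 = n → Q i = Q j) :
    ((List.range n).map Q).reverse = (List.range n).map Q := by
  refine List.ext_getElem (by simp) fun i _ hi => ?_
  simp only [List.length_map, List.length_range] at hi
  simpa using hQ _ _ (by lia)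

/-- The remainders are indexed backwards, from the last one `r 0 = 0` up to `r (n + 1)`, as are the
quotients `Q 0, …, Q (n - 1)`. -/
theorem symmetric_scheme_sq_eq_neg_one_general {n : ℕ} {Q r : ℕ → R} (h0 : r 0 = 0) (h1 : r 1 = 1)
    (hr : ∀ m < n, r (m + 2) = Q m * r (m + 1) + r m)
    (hQ : ∀ i j, i + j + 1 = n → Q i = Q j) :
    r (n + 1) ∣ r n ^ 2 + (-1) ^ n := by
  simpa [continuantMatrix_map_range_row_zero h0 h1 hr] using
    continuantMatrix_dvd_sq_add_of_reverse_eq (reverse_map_range_eq_self hQ)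

end ContinuantMatrix

theorem symQuot_eq_of_add_eq (q : ℤ → ℤ) {s : ℕ} {k l : ℤ} (h : k + l = 2 * s + 1) :
    symQuot q s k = symQuot q s l := by
  obtain rfl : l = 2 * s + 1 - k := by lia
  unfold symQuot
  split_ifs
  · lia
  · rw [sub_sub_cancel]
  · rfl
  · lia

theorem symRem_one (q : ℤ → ℤ) (s : ℕ) : symRem q s 1 = symAux q s (2 * s + 1) := by
  rw [symRem]
  congr 1
  lia

theorem symRem_two (q : ℤ → ℤ) (s : ℕ) : symRem q s 2 = symAux q s (2 * s) := by
  rw [symRem]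
  congr 1
  lia

theorem symAux_dvd_sq_add_one (q : ℤ → ℤ) (s : ℕ) :
    symAux q s (2 * s + 1) ∣ symAux q s (2 * s) ^ 2 + 1 := by
  have hpal (i j : ℕ) (hij : i + j + 1 = 2 * s) :
      symQuot q s (2 * s - i) = symQuot q s (2 * s - j) :=
    symQuot_eq_of_add_eq q (by lia)
  simpa using symmetric_scheme_sq_eq_neg_one_general (r := symAux q s) rfl rfl (fun _ _ => rfl) hpal

theorem symmetric_scheme_sq_eq_neg_one
    (s : ℕ) (hs : 1 ≤ s) (q : ℤ → ℤ) (hq : ∀ k : ℤ, 1 ≤ k → k ≤ (s : ℤ) → 0 < q k) :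
    symRem q s 2 ^ 2 ≡ -1 [ZMOD symRem q s 1] := by
  rw [symRem_one, symRem_two]
  exact (Int.modEq_iff_dvd.mpr (by simpa using symAux_dvd_sq_add_one q s)).symm
end
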